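/- Let R be an infinite field and let F be a barycentrically associative *-ary polynomial function on R. Suppose F_n = M_n^z for some integer n ≥ 2 and some z ∈ R with Δ_n^z ≠ 0. Then either F_{n+1} = M_{n+1}^z (in particular Δ_{n+1}^z ≠ 0) or F_{n+1} is a constant function. Moreover, if Δ_{n+1}^z = 0, then F_{n+1} is a constant function. -/

import Mathlib

/-- Barycentric associativity of a `*`-ary function. -/
def BAssoc {X : Type*} (F : ∀ n : ℕ, (Fin n → X) → X) : Prop :=
  ∀ (a b k : ℕ), 1 ≤ k → ∀ (x : Fin a → X) (y : Fin k → X) (z : Fin b → X),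
    F (a + k + b) (Fin.append (Fin.append x y) z) =
      F (a + k + b) (Fin.append (Fin.append x (fun _ : Fin k => F k y)) z)

/-- `Δ_n^z = Σ_{i=1}^n z^{n-i} (1-z)^{i-1}` (here reindexed from `0` to `n-1`). -/
def Delta {R : Type*} [CommRing R] (n : ℕ) (z : R) : R :=
  ∑ i ∈ Finset.range n, z ^ (n - 1 - i) * (1 - z) ^ i

/-- The weighted arithmetic mean `M_n^z` over a field (defined when `Δ_n^z ≠ 0`). -/
noncomputable def Mz {R : Type*} [Field R] (n : ℕ) (z : R) (x : Fin n → R) : R :=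
  (Delta n z)⁻¹ * ∑ i : Fin n, z ^ (n - 1 - (i : ℕ)) * (1 - z) ^ (i : ℕ) * x i

/-!
Write `W n x = ∑ i, z ^ (n - 1 - i) * (1 - z) ^ i * x i`. Collapsing the first, respectively the
last, `n` of `n + 1` arguments shows that `F (n + 1) x` is unchanged when `x` moves with `x n` and
`W n (x 0, …, x (n - 1))` fixed, or with `x 0` and `W n (x 1, …, x n)` fixed. Because
`z + (1 - z) = 1`, any two tuples with the same `W (n + 1)` are joined by one move of each kind, so
`F (n + 1)` is a function of `W (n + 1)`. Moreover `d (F (n + 1) x) = F (n + 1) x`, where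
`d t = F (n + 1) (t, …, t)` is a polynomial. If `F (n + 1)` is not constant then `d - X` vanishes on
its infinite image, so `d t = t`, and this pins down the function of `W (n + 1)`.
-/

section WeightedSum

variable {R : Type*} [CommRing R]

/-- The numerator of the weighted arithmetic mean `M_n^z`, with indices starting from `0`; unlike
the mean, it makes sense over any commutative ring and when `Δ_n^z = 0`. -/
def weightedSum (n : ℕ) (z : R) (x : Fin n → R) : R :=
  ∑ i : Fin n, z ^ (n - 1 - (i : ℕ)) * (1 - z) ^ (i : ℕ) * x i

theorem weightedSum_const (n : ℕ) (z t : R) : weightedSum n z (fun _ => t) = Delta n z * t := by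
  simp [weightedSum, Delta, Finset.sum_range, Finset.sum_mul]

theorem weightedSum_succ_eq_init_add_last (n : ℕ) (z : R) (x : Fin (n + 1) → R) :
    weightedSum (n + 1) z x =
      z * weightedSum n z (Fin.init x) + (1 - z) ^ n * x (Fin.last n) := by
  simp only [weightedSum, Fin.sum_univ_castSucc, Finset.mul_sum]
  congr 1
  · refine Finset.sum_congr rfl fun i _ => ?_
    have exponent : n + 1 - 1 - (i.castSucc : ℕ) = n - 1 - i + 1 := by
      simp only [Fin.val_castSucc]
      omega
    rw [exponent, pow_succ, Fin.val_castSucc, Fin.init]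
    ring
  · simp

theorem weightedSum_succ_eq_head_add_tail (n : ℕ) (z : R) (x : Fin (n + 1) → R) :
    weightedSum (n + 1) z x = z ^ n * x 0 + (1 - z) * weightedSum n z (Fin.tail x) := by
  simp only [weightedSum, Fin.sum_univ_succ, Finset.mul_sum]
  congr 1
  · simp
  · refine Finset.sum_congr rfl fun i _ => ?_
    have exponent : n + 1 - 1 - (i.succ : ℕ) = n - 1 - i := by
      simp only [Fin.val_succ]
      omega
    rw [exponent, Fin.val_succ, Fin.tail]
    ring

theorem weightedSum_succ_surjective (n : ℕ) (z : R) :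
    Function.Surjective (weightedSum (n + 1) z) := by
  intro t
  -- With these binomial weights the sum is `(z + (1 - z)) ^ n * t`.
  refine ⟨fun i => n.choose i * t, ?_⟩
  calc weightedSum (n + 1) z (fun i => n.choose i * t)
      = ((1 - z) + z) ^ n * t := by
        rw [add_pow, Finset.sum_range, Finset.sum_mul]
        refine Finset.sum_congr rfl fun i _ => ?_
        rw [Nat.add_sub_cancel]
        ring
    _ = t := by simp

theorem exists_weightedSum_init_eq_and_weightedSum_tail_eq {m : ℕ} {z : R}
    {x y : Fin (m + 3) → R} (hxy : weightedSum (m + 3) z x = weightedSum (m + 3) z y) :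
    ∃ u : Fin (m + 3) → R,
      (weightedSum (m + 2) z (Fin.init u) = weightedSum (m + 2) z (Fin.init x) ∧
        u (Fin.last _) = x (Fin.last _)) ∧
      (weightedSum (m + 2) z (Fin.tail u) = weightedSum (m + 2) z (Fin.tail y) ∧
        u 0 = y 0) := by
  let mid (v : Fin (m + 3) → R) : R := weightedSum (m + 1) z (Fin.init (Fin.tail v))
  have sum_init (v : Fin (m + 3) → R) : weightedSum (m + 2) z (Fin.init v) =
      z ^ (m + 1) * v 0 + (1 - z) * mid v := by
    rw [weightedSum_succ_eq_head_add_tail, Fin.tail_init_eq_init_tail]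
    rfl
  have sum_tail (v : Fin (m + 3) → R) : weightedSum (m + 2) z (Fin.tail v) =
      z * mid v + (1 - z) ^ (m + 1) * v (Fin.last _) :=
    weightedSum_succ_eq_init_add_last (m + 1) z (Fin.tail v)
  rw [weightedSum_succ_eq_head_add_tail, weightedSum_succ_eq_head_add_tail (x := y),
    sum_tail, sum_tail] at hxy
  -- The conditions on `u` prescribe `(1 - z) * mid u` and `z * mid u`; adding them gives `mid u`.
  obtain ⟨a, ha⟩ := weightedSum_succ_surjective m z
    (z ^ (m + 1) * (x 0 - y 0) + (1 - z) * mid x + z * mid y +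
      (1 - z) ^ (m + 1) * (y (Fin.last _) - x (Fin.last _)))
  let u : Fin (m + 3) → R := Fin.cons (y 0) (Fin.snoc a (x (Fin.last _)))
  have u_head : u 0 = y 0 := Fin.cons_zero _ _
  have u_last : u (Fin.last _) = x (Fin.last _) := by
    simp only [u, Fin.cons_snoc_eq_snoc_cons, Fin.snoc_last]
  have u_mid : mid u = weightedSum (m + 1) z a := by
    simp only [mid, u, Fin.tail_cons, Fin.init_snoc]
  refine ⟨u, ⟨?_, u_last⟩, ?_, u_head⟩
  · rw [sum_init, sum_init, u_head, u_mid]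
    linear_combination (1 - z) * ha - hxy
  · rw [sum_tail, sum_tail, u_last, u_mid]
    linear_combination z * ha + hxy

end WeightedSum

theorem apply_comp_cast {X Y : Type*} (F : ∀ n : ℕ, (Fin n → X) → Y) {m n : ℕ} (h : m = n)
    (v : Fin n → X) : F m (v ∘ Fin.cast h) = F n v := by
  subst h
  rfl

namespace BAssoc

variable {X : Type*} {F : ∀ n : ℕ, (Fin n → X) → X}

theorem apply_append_left (hB : BAssoc F) {k : ℕ} (hk : 1 ≤ k) {b : ℕ} (y : Fin k → X)
    (z : Fin b → X) :
    F (k + b) (Fin.append y z) = F (k + b) (Fin.append (fun _ => F k y) z) := by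
  have h := hB 0 b k hk Fin.elim0 y z
  simpa only [Fin.elim0_append, Fin.append_cast_left, apply_comp_cast] using h

theorem apply_append_right (hB : BAssoc F) {k : ℕ} (hk : 1 ≤ k) {a : ℕ} (x : Fin a → X)
    (y : Fin k → X) :
    F (a + k) (Fin.append x y) = F (a + k) (Fin.append x (fun _ => F k y)) := by
  have h := hB a 0 k hk x y Fin.elim0
  simpa only [Fin.append_elim0, apply_comp_cast] using h

theorem apply_const_apply (hB : BAssoc F) {k : ℕ} (hk : 1 ≤ k) (y : Fin k → X) :
    F k (fun _ => F k y) = F k y := by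
  have h := hB.apply_append_left hk y Fin.elim0
  simpa only [Fin.append_elim0, apply_comp_cast] using h.symm

theorem apply_eq_of_init (hB : BAssoc F) {n : ℕ} (hn : 1 ≤ n) {x y : Fin (n + 1) → X}
    (hinit : F n (Fin.init x) = F n (Fin.init y)) (hlast : x (Fin.last n) = y (Fin.last n)) :
    F (n + 1) x = F (n + 1) y := by
  have collapse (v : Fin (n + 1) → X) :
      F (n + 1) v = F (n + 1) (Fin.snoc (fun _ => F n (Fin.init v)) (v (Fin.last n))) := by
    have h := hB.apply_append_left hn (Fin.init v) (fun _ : Fin 1 => v (Fin.last n))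
    simpa only [Fin.append_right_eq_snoc, Fin.snoc_init_self] using h
  rw [collapse x, collapse y, hinit, hlast]

theorem apply_eq_of_tail (hB : BAssoc F) {n : ℕ} (hn : 1 ≤ n) {x y : Fin (n + 1) → X}
    (hhead : x 0 = y 0) (htail : F n (Fin.tail x) = F n (Fin.tail y)) :
    F (n + 1) x = F (n + 1) y := by
  have collapse (v : Fin (n + 1) → X) :
      F (n + 1) v = F (n + 1) (Fin.cons (v 0) (fun _ => F n (Fin.tail v))) := by
    have h := hB.apply_append_right hn (fun _ : Fin 1 => v 0) (Fin.tail v)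
    simpa only [Fin.append_left_eq_cons, apply_comp_cast, Fin.cons_self_tail] using h
  rw [collapse x, collapse y, hhead, htail]

variable {R : Type*} [CommRing R] {G : ∀ n : ℕ, (Fin n → R) → R}

theorem factorsThrough_weightedSum_succ (hB : BAssoc G) {n : ℕ} (hn : 2 ≤ n) {z : R}
    (hG : (G n).FactorsThrough (weightedSum n z)) :
    (G (n + 1)).FactorsThrough (weightedSum (n + 1) z) := by
  intro x y hxy
  obtain ⟨m, rfl⟩ := Nat.exists_eq_add_of_le' hn
  obtain ⟨u, ⟨hinit, hlast⟩, htail, hhead⟩ :=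
    exists_weightedSum_init_eq_and_weightedSum_tail_eq hxy
  calc G (m + 3) x = G (m + 3) u :=
        (hB.apply_eq_of_init (by omega) (hG hinit) hlast).symm
    _ = G (m + 3) y := hB.apply_eq_of_tail (by omega) hhead (hG htail)

theorem factorsThrough_weightedSum_of_le (hB : BAssoc G) {n N : ℕ} (hn : 2 ≤ n) (hN : n ≤ N)
    {z : R} (hG : (G n).FactorsThrough (weightedSum n z)) :
    (G N).FactorsThrough (weightedSum N z) := by
  induction N, hN using Nat.le_induction with
  | base => exact hG
  | succ k hk ih => exact hB.factorsThrough_weightedSum_succ (hn.trans hk) ih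

end BAssoc

theorem polynomial_eval_aeval {R σ : Type*} [CommSemiring R] (t : R) (g : σ → Polynomial R)
    (p : MvPolynomial σ R) :
    (MvPolynomial.aeval g p).eval t = MvPolynomial.eval (fun i => (g i).eval t) p := by
  have h := MvPolynomial.comp_aeval_apply g (Polynomial.aeval t : Polynomial R →ₐ[R] R) p
  simpa only [Polynomial.coe_aeval_eq_eval, MvPolynomial.aeval_eq_eval] using h

theorem eval_const_eq_self_or_eval_eq_const {R σ : Type*} [CommRing R] [IsDomain R] [Infinite R]
    {p : MvPolynomial σ R}
    (hp : ∀ x, MvPolynomial.eval (fun _ => MvPolynomial.eval x p) p = MvPolynomial.eval x p) :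
    (∀ t, MvPolynomial.eval (fun _ => t) p = t) ∨ ∃ c, ∀ x, MvPolynomial.eval x p = c := by
  refine or_iff_not_imp_right.mpr fun nonconst => ?_
  push Not at nonconst
  obtain ⟨x, hx⟩ := nonconst (MvPolynomial.eval 0 p)
  let diag : Polynomial R := MvPolynomial.aeval (fun _ => Polynomial.X) p
  let line : Polynomial R := MvPolynomial.aeval (fun i => Polynomial.C (x i) * Polynomial.X) p
  have eval_diag (t : R) : diag.eval t = MvPolynomial.eval (fun _ => t) p := by
    simp [diag, polynomial_eval_aeval]
  have eval_line (t : R) : line.eval t = MvPolynomial.eval (fun i => x i * t) p := by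
    simp [line, polynomial_eval_aeval]
  have diag_comp_line : (diag - Polynomial.X).comp line = 0 :=
    Polynomial.funext fun t => by simp [Polynomial.eval_comp, eval_diag, eval_line, hp]
  rcases Polynomial.comp_eq_zero_iff.mp diag_comp_line with diag_eq | ⟨-, line_eq⟩
  · intro t
    rw [← eval_diag, sub_eq_zero.mp diag_eq, Polynomial.eval_X]
  · refine absurd ?_ hx
    calc MvPolynomial.eval x p = line.eval 1 := by simp [eval_line]
      _ = line.eval 0 := by rw [line_eq, Polynomial.eval_C, Polynomial.eval_C]
      _ = MvPolynomial.eval 0 p := by simp [eval_line, Pi.zero_def]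

theorem Mz_factorsThrough_weightedSum {R : Type*} [Field R] (n : ℕ) (z : R) :
    (Mz n z).FactorsThrough (weightedSum n z) :=
  fun _ _ hxy => congrArg ((Delta n z)⁻¹ * ·) hxy

theorem Delta_ne_zero_and_eq_Mz_of_factorsThrough {R : Type*} [Field R] {n : ℕ} {z : R}
    {f : (Fin n → R) → R} (hf : f.FactorsThrough (weightedSum n z))
    (hdiag : ∀ t, f (fun _ => t) = t) :
    Delta n z ≠ 0 ∧ f = Mz n z := by
  have hΔ : Delta n z ≠ 0 := by
    intro h0
    have sum_eq : weightedSum n z (fun _ => 0) = weightedSum n z (fun _ => 1) := by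
      simp only [weightedSum_const, h0, zero_mul]
    exact zero_ne_one ((hdiag 0).symm.trans ((hf sum_eq).trans (hdiag 1)))
  refine ⟨hΔ, funext fun x => ?_⟩
  have sum_eq : weightedSum n z x = weightedSum n z (fun _ => Mz n z x) := by
    rw [weightedSum_const, Mz, mul_inv_cancel_left₀ hΔ, weightedSum]
  exact (hf sum_eq).trans (hdiag _)

theorem succ_of_weighted_mean_general {R : Type*} [Field R] [Infinite R]
    {F : ∀ n : ℕ, (Fin n → R) → R} (hB : BAssoc F) {n N : ℕ} (hn : 2 ≤ n) (hN : n ≤ N) {z : R}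
    (hFn : (F n).FactorsThrough (weightedSum n z))
    {p : MvPolynomial (Fin N) R} (hp : ∀ x, F N x = MvPolynomial.eval x p) :
    (Delta N z ≠ 0 ∧ F N = Mz N z) ∨ ∃ c : R, ∀ x, F N x = c := by
  have idem (x : Fin N → R) :
      MvPolynomial.eval (fun _ => MvPolynomial.eval x p) p = MvPolynomial.eval x p := by
    simpa only [hp] using hB.apply_const_apply (by omega) x
  simp only [hp]
  refine (eval_const_eq_self_or_eval_eq_const idem).imp_left fun hdiag => ?_
  exact Delta_ne_zero_and_eq_Mz_of_factorsThrough (hB.factorsThrough_weightedSum_of_le hn hN hFn)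
    fun t => (hp _).trans (hdiag t)

/-- Proposition: let `F` be a B-associative `*`-ary polynomial function on an infinite
field `R` with `F_n = M_n^z` for some `n ≥ 2` and some `z` with `Δ_n^z ≠ 0`. Then either
`F_{n+1} = M_{n+1}^z` (in particular `Δ_{n+1}^z ≠ 0`) or `F_{n+1}` is constant; moreover,
if `Δ_{n+1}^z = 0` then `F_{n+1}` is constant. -/
theorem succ_of_weighted_mean
    {R : Type*} [Field R] [Infinite R]
    (F : ∀ n : ℕ, (Fin n → R) → R)
    (hpoly : ∀ n : ℕ, 1 ≤ n →
      ∃ p : MvPolynomial (Fin n) R, ∀ x : Fin n → R, F n x = MvPolynomial.eval x p)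
    (hB : BAssoc F)
    (n : ℕ) (hn : 2 ≤ n) (z : R) (hΔ : Delta n z ≠ 0)
    (hFn : F n = Mz n z) :
    ((Delta (n + 1) z ≠ 0 ∧ F (n + 1) = Mz (n + 1) z) ∨
      ∃ c : R, ∀ x : Fin (n + 1) → R, F (n + 1) x = c) ∧
    (Delta (n + 1) z = 0 → ∃ c : R, ∀ x : Fin (n + 1) → R, F (n + 1) x = c) := by
  obtain ⟨p, hp⟩ := hpoly (n + 1) n.succ_pos
  have mean_or_const := succ_of_weighted_mean_general hB hn n.le_succ
    (hFn ▸ Mz_factorsThrough_weightedSum n z) hp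
  exact ⟨mean_or_const, fun h0 => mean_or_const.resolve_left fun mean => mean.1 h0⟩
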